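/- arXiv:0904.1967 — 2 statements merged into one kernel-verified Lean document; each statement's English description precedes it below -/
import Mathlib

section
/- Let D be a minimal counterexample, C its Hamilton cycle with the stated domination property, and x a vertex of D incident with no green edges. Then no vertex y ≠ x monochromatically dominates x both in red and in blue, and no vertex z ≠ x is monochromatically dominated by x both in red and in blue. -/
/-- A 3-coloured tournament on vertex type `V`: between any two distinct
vertices there is exactly one directed edge (`beats`), and `colour x y` gives
the colour (one of three: red, blue, green) of the edge from `x` to `y`
(meaningful when `beats x y` holds). -/
structure CTournament (V : Type*) where
  beats : V → V → Prop
  irrefl : ∀ v, ¬ beats v v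
  asymm : ∀ v w, beats v w → ¬ beats w v
  total : ∀ v w, v ≠ w → beats v w ∨ beats w v
  colour : V → V → Fin 3

namespace CTournament

/-- The colour red. -/
def red : Fin 3 := 0
/-- The colour blue. -/
def blue : Fin 3 := 1
/-- The colour green. -/
def green : Fin 3 := 2

variable {V : Type*} (T : CTournament V)

/-- `x` monochromatically dominates `y` in colour `c`: there is a directed
path (with at least one edge) from `x` to `y` all of whose edges have
colour `c`. -/
def Dom (c : Fin 3) (x y : V) : Prop :=
  Relation.TransGen (fun a b => T.beats a b ∧ T.colour a b = c) x y

/-- `x` monochromatically dominates `y` (in some colour). -/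
def MDom (x y : V) : Prop := ∃ c, T.Dom c x y

/-- `x` monochromatically dominates `y` in colour `c` within the
subtournament induced on the vertex set `S`. -/
def DomIn (S : Set V) (c : Fin 3) (x y : V) : Prop :=
  Relation.TransGen (fun a b => a ∈ S ∧ b ∈ S ∧ T.beats a b ∧ T.colour a b = c) x y

/-- `x` monochromatically dominates `y` within the subtournament induced on `S`. -/
def MDomIn (S : Set V) (x y : V) : Prop := ∃ c, T.DomIn S c x y

/-- `T` contains a `T_3`: three vertices spanning a cyclic triangle whose
three edges have three pairwise distinct colours. -/
def HasT3 : Prop :=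
  ∃ a b c : V, T.beats a b ∧ T.beats b c ∧ T.beats c a ∧
    T.colour a b ≠ T.colour b c ∧ T.colour b c ≠ T.colour c a ∧
    T.colour a b ≠ T.colour c a

/-- Vertex `v` is incident with an edge of colour `c`. -/
def IncidentColour (v : V) (c : Fin 3) : Prop :=
  ∃ w, (T.beats v w ∧ T.colour v w = c) ∨ (T.beats w v ∧ T.colour w v = c)

/-- `T` is a minimal counterexample: it contains no `T_3`, no vertex
monochromatically dominates every other vertex, and every proper nonempty
subset of the vertices spans a subtournament containing a vertex that
monochromatically dominates (within that subtournament) every other vertex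
of the subset. -/
def MinimalCex : Prop :=
  ¬ T.HasT3 ∧
  (¬ ∃ x : V, ∀ y, y ≠ x → T.MDom x y) ∧
  ∀ S : Set V, S.Nonempty → S ≠ Set.univ →
    ∃ x ∈ S, ∀ y ∈ S, y ≠ x → T.MDomIn S x y

/-- The permutation `σ` (sending every vertex to its successor) is a directed
Hamilton cycle of `T`: every vertex beats its successor, and all vertices lie
on a single cycle of `σ`. -/
def IsHamCycle (σ : Equiv.Perm V) : Prop :=
  (∀ v, T.beats v (σ v)) ∧ ∀ v w : V, ∃ n : ℕ, (⇑σ)^[n] v = w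

/-- The domination property of the Hamilton cycle `σ`: every vertex
monochromatically dominates every vertex other than itself and its
predecessor on the cycle, and no vertex monochromatically dominates its
predecessor. -/
def HamDomProp (σ : Equiv.Perm V) : Prop :=
  (∀ x y : V, y ≠ x → y ≠ σ.symm x → T.MDom x y) ∧
  ∀ x : V, ¬ T.MDom x (σ.symm x)

/-- The vertex set of the directed subpath `xCy` of the Hamilton cycle whose
successor permutation is `σ`: all vertices reachable from `x` along the cycle
no later than the first visit of `y`. -/
def PathSet (σ : Equiv.Perm V) (x y : V) : Set V :=
  {z | ∃ k : ℕ, (⇑σ)^[k] x = z ∧ ∀ j < k, (⇑σ)^[j] x ≠ y}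

/-- `R^+(x)`: the vertices to which `x` sends a red edge. -/
def Rplus (x : V) : Set V := {v | T.beats x v ∧ T.colour x v = red}
/-- `R^-(x)`: the vertices from which `x` receives a red edge. -/
def Rminus (x : V) : Set V := {v | T.beats v x ∧ T.colour v x = red}
/-- `B^+(x)`: the vertices to which `x` sends a blue edge. -/
def Bplus (x : V) : Set V := {v | T.beats x v ∧ T.colour x v = blue}
/-- `B^-(x)`: the vertices from which `x` receives a blue edge. -/
def Bminus (x : V) : Set V := {v | T.beats v x ∧ T.colour v x = blue}
/-- `R_r^+(x) = {v ∈ R^+(x) : v monochromatically dominates x in red}`. -/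
def Rrplus (x : V) : Set V := {v ∈ T.Rplus x | T.Dom red v x}
/-- `R_r^-(x) = {v ∈ R^-(x) : x monochromatically dominates v in red}`. -/
def Rrminus (x : V) : Set V := {v ∈ T.Rminus x | T.Dom red x v}
/-- `B_b^+(x) = {v ∈ B^+(x) : v monochromatically dominates x in blue}`. -/
def Bbplus (x : V) : Set V := {v ∈ T.Bplus x | T.Dom blue v x}
/-- `B_b^-(x) = {v ∈ B^-(x) : x monochromatically dominates v in blue}`. -/
def Bbminus (x : V) : Set V := {v ∈ T.Bminus x | T.Dom blue x v}

end CTournament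
/-- In a minimal counterexample with Hamilton cycle `σ`, if the
vertex `x` is incident with no green edge then no vertex `y ≠ x` monochromatically
dominates `x` both in red and in blue, and no vertex `z ≠ x` is monochromatically
dominated by `x` both in red and in blue. -/
theorem red_blue_domination_disjoint {V : Type*} [Fintype V] (T : CTournament V)
    (h : T.MinimalCex) (σ : Equiv.Perm V)
    (hσ : T.IsHamCycle σ) (hprop : T.HamDomProp σ)
    (x : V) (hx : ¬ T.IncidentColour x CTournament.green) :
    (∀ y : V, y ≠ x →
      ¬ (T.Dom CTournament.red y x ∧ T.Dom CTournament.blue y x)) ∧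
    (∀ z : V, z ≠ x →
      ¬ (T.Dom CTournament.red x z ∧ T.Dom CTournament.blue x z)) := by
  obtain ⟨hd, hn⟩ := hprop
  have c3 : ∀ c : Fin 3, c = CTournament.red ∨ c = CTournament.blue ∨ c = CTournament.green := by
    decide
  have out : ∀ w, T.MDom x w → T.Dom CTournament.red x w ∨ T.Dom CTournament.blue x w := by
    rintro w ⟨c, hc⟩
    rcases c3 c with rfl | rfl | rfl
    · exact Or.inl hc
    · exact Or.inr hc
    · obtain ⟨b, hb, -⟩ := Relation.TransGen.head'_iff.1 hc
      exact absurd ⟨b, Or.inl hb⟩ hx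
  have inn : ∀ w, T.MDom w x → T.Dom CTournament.red w x ∨ T.Dom CTournament.blue w x := by
    rintro w ⟨c, hc⟩
    rcases c3 c with rfl | rfl | rfl
    · exact Or.inl hc
    · exact Or.inr hc
    · obtain ⟨b, -, hb⟩ := Relation.TransGen.tail'_iff.1 hc
      exact absurd ⟨b, Or.inr hb⟩ hx
  constructor
  · rintro y hyx ⟨hr, hb⟩
    apply hn y
    by_cases h1 : σ.symm y = x
    · rw [h1]; exact ⟨_, hr⟩
    · rcases out _ (hd x (σ.symm y) h1 (fun e => hyx (σ.symm.injective e))) with h2 | h2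
      · exact ⟨_, Relation.TransGen.trans hr h2⟩
      · exact ⟨_, Relation.TransGen.trans hb h2⟩
  · rintro z hzx ⟨hr, hb⟩
    have h0 := hn (σ z)
    rw [Equiv.symm_apply_apply] at h0
    apply h0
    by_cases h1 : x = σ z
    · rw [← h1]; exact ⟨_, hr⟩
    · rcases inn _ (hd (σ z) x h1 (fun e => hzx (by simpa using e.symm))) with h2 | h2
      · exact ⟨_, Relation.TransGen.trans h2 hr⟩
      · exact ⟨_, Relation.TransGen.trans h2 hb⟩
end

section
/- Let D be a minimal counterexample, C its Hamilton cycle with the stated domination property, and x a vertex of D incident with no green edges such that the edge between x^- and x is red (directed from x^- to x). Then for every pair of vertices m ∈ B_b^+(x) and n ∈ R_r^-(x) with m ≠ n^+, the directed subpath mCn of C contains vertices p and t, with p appearing no later than t along mCn, such that p ∈ R_r^+(x) and t ∈ B_b^-(x). -/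
namespace CTournament

lemma colour_cases (c : Fin 3) : c = red ∨ c = blue ∨ c = green := by
  fin_cases c <;> simp [red, blue, green]

section Aux
variable {V : Type*} {T : CTournament V} {σ : Equiv.Perm V} {x : V}

lemma dom_of_domIn {S : Set V} {c : Fin 3} {a b : V} (h : T.DomIn S c a b) : T.Dom c a b :=
  by
  induction h with
  | single h => exact .single ⟨h.2.2.1, h.2.2.2⟩
  | tail _ h ih => exact .tail ih ⟨h.2.2.1, h.2.2.2⟩

/-- x has no green edge: what x dominates, it dominates in red or blue. -/
lemma in_cases (hx : ¬ T.IncidentColour x green) {v : V} (h : T.MDom x v) :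
    T.Dom red x v ∨ T.Dom blue x v := by
  obtain ⟨c, hc⟩ := h
  rcases colour_cases c with rfl | rfl | rfl
  · exact Or.inl hc
  · exact Or.inr hc
  · exfalso
    obtain ⟨w, hw, -⟩ := Relation.TransGen.head'_iff.1 hc
    exact hx ⟨w, Or.inl hw⟩

lemma out_cases (hx : ¬ T.IncidentColour x green) {v : V} (h : T.MDom v x) :
    T.Dom red v x ∨ T.Dom blue v x := by
  obtain ⟨c, hc⟩ := h
  rcases colour_cases c with rfl | rfl | rfl
  · exact Or.inl hc
  · exact Or.inr hc
  · exfalso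
    obtain ⟨w, -, hw⟩ := Relation.TransGen.tail'_iff.1 hc
    exact hx ⟨w, Or.inr hw⟩

lemma edge_cases (hx : ¬ T.IncidentColour x green) {v : V} (h : v ≠ x) :
    v ∈ T.Rplus x ∨ v ∈ T.Rminus x ∨ v ∈ T.Bplus x ∨ v ∈ T.Bminus x := by
  rcases T.total v x h with hb | hb
  · rcases colour_cases (T.colour v x) with hc | hc | hc
    · exact Or.inr (Or.inl ⟨hb, hc⟩)
    · exact Or.inr (Or.inr (Or.inr ⟨hb, hc⟩))
    · exact absurd ⟨v, Or.inr ⟨hb, hc⟩⟩ hx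
  · rcases colour_cases (T.colour x v) with hc | hc | hc
    · exact Or.inl ⟨hb, hc⟩
    · exact Or.inr (Or.inr (Or.inl ⟨hb, hc⟩))
    · exact absurd ⟨v, Or.inl ⟨hb, hc⟩⟩ hx

lemma in_out (hprop : T.HamDomProp σ) {c : Fin 3} {v : V} (h1 : T.Dom c x v)
    (h2 : T.Dom c (σ v) x) : False := by
  apply hprop.2 (σ v)
  rw [Equiv.symm_apply_apply]
  exact ⟨c, Relation.TransGen.trans h2 h1⟩

lemma in_nonempty (hx : ¬ T.IncidentColour x green) (hprop : T.HamDomProp σ) {v : V}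
    (h1 : v ≠ x) (h2 : σ v ≠ x) : T.Dom red x v ∨ T.Dom blue x v :=
  in_cases hx (hprop.1 x v h1 (fun h => h2 (by rw [h, Equiv.apply_symm_apply])))

lemma out_nonempty (hx : ¬ T.IncidentColour x green) (hprop : T.HamDomProp σ) {v : V}
    (h1 : v ≠ x) (h2 : σ v ≠ x) : T.Dom red (σ v) x ∨ T.Dom blue (σ v) x :=
  out_cases hx (hprop.1 (σ v) x h2.symm (fun h => h1 (by rw [h, Equiv.symm_apply_apply])))

lemma in_single (hx : ¬ T.IncidentColour x green) (hprop : T.HamDomProp σ) {v : V}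
    (h1 : v ≠ x) (h2 : σ v ≠ x) (hr : T.Dom red x v) (hb : T.Dom blue x v) : False := by
  rcases out_nonempty hx hprop h1 h2 with h | h
  · exact in_out hprop hr h
  · exact in_out hprop hb h

lemma out_single (hx : ¬ T.IncidentColour x green) (hprop : T.HamDomProp σ) {v : V}
    (h2 : v ≠ x) (hr : T.Dom red v x) (hb : T.Dom blue v x) : False := by
  obtain ⟨u, rfl⟩ := σ.surjective v
  by_cases h1 : u = x
  · subst h1
    apply hprop.2 (σ u)
    rw [Equiv.symm_apply_apply]
    exact ⟨_, hr⟩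
  rcases in_nonempty hx hprop h1 h2 with h | h
  · exact in_out hprop h hr
  · exact in_out hprop h hb

lemma ne_of_beats_left {v w : V} (h : T.beats v w) : v ≠ w := by
  rintro rfl
  exact T.irrefl _ h

/-- A green path inside B⁺ ∪ R⁻ which starts in B⁺ stays there, as there is no T₃. -/
lemma green_stays (hT : ¬ T.HasT3) {S : Set V} (hS : ∀ v ∈ S, v ∈ T.Bplus x ∨ v ∈ T.Rminus x)
    {a b : V} (ha : a ∈ T.Bplus x) (h : T.DomIn S green a b) : b ∈ T.Bplus x := by
  have step : ∀ u w, u ∈ T.Bplus x →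
      (u ∈ S ∧ w ∈ S ∧ T.beats u w ∧ T.colour u w = green) → w ∈ T.Bplus x := by
    rintro u w hu ⟨-, hw, hb, hc⟩
    rcases hS w hw with h | h
    · exact h
    · refine absurd ⟨x, u, w, hu.1, hb, h.1, ?_, ?_, ?_⟩ hT
      · rw [hu.2, hc]; decide
      · rw [hc, h.2]; decide
      · rw [hu.2, h.2]; decide
  induction h with
  | single h => exact step _ _ ha h
  | tail _ h ih => exact step _ _ ih h

lemma main_aux (h : T.MinimalCex) (hprop : T.HamDomProp σ) (hx : ¬ T.IncidentColour x green)
    (k : ℕ) : ∀ m ∈ T.Bbplus x, (∀ i ≤ k, (⇑σ)^[i] m ≠ x) → (⇑σ)^[k] m ∈ T.Rminus x →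
      ¬ T.Dom blue x ((⇑σ)^[k] m) →
      ∃ i j, i ≤ j ∧ j ≤ k ∧ (⇑σ)^[i] m ∈ T.Rrplus x ∧ (⇑σ)^[j] m ∈ T.Bbminus x := by
  induction k using Nat.strong_induction_on with
  | _ k ih =>
  intro m hm hne hn hnb
  have suc : ∀ i, (⇑σ)^[i + 1] m = σ ((⇑σ)^[i] m) := fun i => Function.iterate_succ_apply' σ i m
  have hin : ∀ i < k, T.Dom red x ((⇑σ)^[i] m) ∨ T.Dom blue x ((⇑σ)^[i] m) := fun i hi =>
    in_nonempty hx hprop (hne i hi.le) (by rw [← suc]; exact hne _ hi)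
  have hins : ∀ i < k, T.Dom red x ((⇑σ)^[i] m) → T.Dom blue x ((⇑σ)^[i] m) → False := fun i hi =>
    in_single hx hprop (hne i hi.le) (by rw [← suc]; exact hne _ hi)
  have hout : ∀ i < k, T.Dom red x ((⇑σ)^[i] m) → T.Dom blue ((⇑σ)^[i+1] m) x := by
    intro i hi hr
    rcases out_nonempty hx hprop (hne i hi.le) (by rw [← suc]; exact hne _ hi) with h | h
    · exact (in_out hprop hr h).elim
    · rw [suc]; exact h
  have hout' : ∀ i < k, T.Dom blue x ((⇑σ)^[i] m) → T.Dom red ((⇑σ)^[i+1] m) x := by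
    intro i hi hr
    rcases out_nonempty hx hprop (hne i hi.le) (by rw [← suc]; exact hne _ hi) with h | h
    · rw [suc]; exact h
    · exact (in_out hprop hr h).elim
  have houts : ∀ i ≤ k, T.Dom red ((⇑σ)^[i] m) x → T.Dom blue ((⇑σ)^[i] m) x → False :=
    fun i hi => out_single hx hprop (hne i hi)
  have hmb : T.Dom blue x m := .single hm.1
  have hnr : T.Dom red ((⇑σ)^[k] m) x := .single hn
  by_cases hall : ∀ i < k, ¬ T.Dom red x ((⇑σ)^[i] m)
  · exfalso
    set S : Set V := {v | ∃ i ≤ k, (⇑σ)^[i] m = v} with hSdef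
    have hmS : m ∈ S := ⟨0, Nat.zero_le _, rfl⟩
    have hnS : (⇑σ)^[k] m ∈ S := ⟨k, le_rfl, rfl⟩
    have hS : ∀ v ∈ S, v ∈ T.Bplus x ∨ v ∈ T.Rminus x := by
      rintro v ⟨i, hi, rfl⟩
      rcases Nat.eq_or_lt_of_le hi with rfl | hi
      · exact Or.inr hn
      rcases i with _ | i
      · exact Or.inl hm.1
      rcases edge_cases hx (hne (i+1) hi.le) with h | h | h | h
      · exact absurd (.single h) (hall _ hi)
      · exact Or.inr h
      · exact Or.inl h
      · exfalso
        have hb := (hin i (by omega)).resolve_left (hall i (by omega))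
        exact houts (i+1) hi.le (hout' i (by omega) hb) (.single h)
    have hxS : x ∉ S := by
      rintro ⟨i, hi, he⟩
      exact hne i hi he
    obtain ⟨v, ⟨i, hi, rfl⟩, hv⟩ := h.2.2 S ⟨m, hmS⟩ (fun he => hxS (he ▸ Set.mem_univ x))
    have hmn : T.MDomIn S m ((⇑σ)^[k] m) := by
      rcases i with _ | i
      · apply hv _ hnS
        intro he
        rw [he] at hn
        exact T.asymm _ _ hn.1 hm.1.1
      · exfalso
        by_cases he : (⇑σ)^[i] m = (⇑σ)^[i+1] m
        · -- the cycle would be trivial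
          have hfix : σ ((⇑σ)^[i] m) = (⇑σ)^[i] m := by rw [← suc]; exact he.symm
          have hm1 : σ m = m := by
            have h2 : (⇑σ)^[i] (σ m) = (⇑σ)^[i] m := by
              rw [← Function.iterate_succ_apply, suc]; exact hfix
            exact (σ.injective.iterate i) h2
          have h3 : (⇑σ)^[k] m = m := Function.iterate_fixed hm1 k
          rw [h3] at hn
          exact T.asymm _ _ hn.1 hm.1.1
        · obtain ⟨c, hc⟩ := hv ((⇑σ)^[i] m) ⟨i, by omega, rfl⟩ he
          apply hprop.2 ((⇑σ)^[i+1] m)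
          refine ⟨c, ?_⟩
          have h4 : σ.symm ((⇑σ)^[i+1] m) = (⇑σ)^[i] m := by
            rw [suc, Equiv.symm_apply_apply]
          rw [h4]
          exact dom_of_domIn hc
    obtain ⟨c, hc⟩ := hmn
    rcases colour_cases c with rfl | rfl | rfl
    · exact houts 0 (Nat.zero_le _) ((dom_of_domIn hc).trans hnr) hm.2
    · exact hnb (hmb.trans (dom_of_domIn hc))
    · have h5 := green_stays h.1 hS hm.1 hc
      exact T.asymm _ _ hn.1 h5.1
  · push Not at hall
    classical
    obtain ⟨hik, hir⟩ := Nat.find_spec hall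
    have himin := fun j => Nat.find_min (m := j) hall
    generalize Nat.find hall = i at hik hir himin
    rcases i with _ | i
    · exact (hins 0 hik hir hmb).elim
    have hib : T.Dom blue x ((⇑σ)^[i] m) := (hin i (by omega)).resolve_left
      (fun hr => himin i (by omega) ⟨by omega, hr⟩)
    have hiout := hout' i (by omega) hib
    have hinb : ¬ T.Dom blue x ((⇑σ)^[i+1] m) := hins _ hik hir
    rcases edge_cases hx (hne (i+1) hik.le) with he | he | he | he
    · have hp : (⇑σ)^[i+1] m ∈ T.Rrplus x := ⟨he, hiout⟩
      have hex : ∃ j, i + 1 ≤ j ∧ j < k ∧ T.Dom blue x ((⇑σ)^[j] m) := by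
        refine ⟨k - 1, by omega, by omega, (hin (k-1) (by omega)).resolve_left ?_⟩
        intro hr
        have h6 := hout (k-1) (by omega) hr
        rw [show k - 1 + 1 = k by omega] at h6
        exact houts k le_rfl hnr h6
      obtain ⟨hij, hjk, hjb⟩ := Nat.find_spec hex
      have hjmin := fun j => Nat.find_min (m := j) hex
      generalize Nat.find hex = j at hij hjk hjb hjmin
      rcases j with _ | j
      · omega
      have hlt : i + 1 ≠ j + 1 := by
        intro e
        rw [← e] at hjb
        exact hinb hjb
      have hjr : T.Dom red x ((⇑σ)^[j] m) := (hin j (by omega)).resolve_right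
        (fun hb => hjmin j (by omega) ⟨by omega, by omega, hb⟩)
      have hjout := hout j (by omega) hjr
      rcases edge_cases hx (hne (j+1) hjk.le) with hf | hf | hf | hf
      · exact (hins _ hjk (.single hf) hjb).elim
      · exact (houts _ hjk.le (.single hf) hjout).elim
      · have hadd : ∀ a, (⇑σ)^[a] ((⇑σ)^[j+1] m) = (⇑σ)^[a + (j+1)] m := fun a =>
          (Function.iterate_add_apply _ _ _ _).symm
        have hk : k - (j+1) + (j+1) = k := by omega
        obtain ⟨a, b, hab, hb, h1, h2⟩ := ih (k - (j+1)) (by omega) ((⇑σ)^[j+1] m) ⟨hf, hjout⟩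
          (by intro a ha; rw [hadd]; exact hne _ (by omega))
          (by rw [hadd, hk]; exact hn) (by rw [hadd, hk]; exact hnb)
        rw [hadd] at h1 h2
        exact ⟨_, _, by omega, by omega, h1, h2⟩
      · exact ⟨i+1, j+1, hij, hjk.le, hp, hf, hjb⟩
    · obtain ⟨a, b, hab, hb, h1, h2⟩ := ih (i+1) hik m hm
        (fun a ha => hne a (by omega)) he hinb
      exact ⟨a, b, hab, by omega, h1, h2⟩
    · exact (hinb (.single he)).elim
    · exact (houts _ hik.le hiout (.single he)).elim

end Aux

end CTournament

/-- In a minimal counterexample with Hamilton cycle `σ`, if `x`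
is incident with no green edge and the edge from `x⁻` to `x` is red, then for all
`m ∈ B_b⁺(x)` and `n ∈ R_r⁻(x)` with `m ≠ n⁺`, the subpath `mCn` contains vertices
`p ∈ R_r⁺(x)` and `t ∈ B_b⁻(x)` with `p` appearing no later than `t` along `mCn`. -/
theorem subpath_contains_pCt {V : Type*} [Fintype V] (T : CTournament V)
    (h : T.MinimalCex) (σ : Equiv.Perm V)
    (hσ : T.IsHamCycle σ) (hprop : T.HamDomProp σ)
    (x : V) (hx : ¬ T.IncidentColour x CTournament.green)
    (hpred : T.beats (σ.symm x) x)
    (hpredred : T.colour (σ.symm x) x = CTournament.red) :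
    ∀ m ∈ T.Bbplus x, ∀ n ∈ T.Rrminus x, m ≠ σ n →
      ∃ (p t : V) (k l : ℕ), k ≤ l ∧
        (⇑σ)^[k] m = p ∧ (⇑σ)^[l] m = t ∧ (∀ j < l, (⇑σ)^[j] m ≠ n) ∧
        p ∈ T.Rrplus x ∧ t ∈ T.Bbminus x := by
  classical
  intro m hm n hn _
  have hex := hσ.2 m n
  have hk := Nat.find_spec hex
  have hkmin := fun j => Nat.find_min (m := j) hex
  generalize Nat.find hex = k at hk hkmin
  have hmx : m ≠ x := (CTournament.ne_of_beats_left hm.1.1).symm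
  have hnx : n ≠ x := CTournament.ne_of_beats_left hn.1.1
  obtain ⟨i, j, hij, hjk, hp, ht⟩ : ∃ i j, i ≤ j ∧ j ≤ k ∧ (⇑σ)^[i] m ∈ T.Rrplus x ∧
      (⇑σ)^[j] m ∈ T.Bbminus x := by
    by_cases hall : ∀ i ≤ k, (⇑σ)^[i] m ≠ x
    · refine CTournament.main_aux h hprop hx k m hm hall (hk ▸ hn.1) ?_
      rw [hk]
      refine CTournament.in_single hx hprop hnx ?_ hn.2
      intro he
      apply hprop.2 x
      rw [← he, Equiv.symm_apply_apply, he]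
      exact ⟨_, hn.2⟩
    · push Not at hall
      obtain ⟨hik, hix⟩ := Nat.find_spec hall
      have himin := fun j => Nat.find_min (m := j) hall
      generalize Nat.find hall = i at hik hix himin
      rcases i with _ | i
      · exact absurd hix hmx
      have he : (⇑σ)^[i] m = σ.symm x := by
        rw [← hix, Function.iterate_succ_apply', Equiv.symm_apply_apply]
      obtain ⟨a, b, hab, hb, h1, h2⟩ := CTournament.main_aux h hprop hx i m hm
        (fun j hj hjx => himin j (by omega) ⟨by omega, hjx⟩)
        (by rw [he]; exact ⟨hpred, hpredred⟩)
        (by rw [he]; exact fun hd => hprop.2 x ⟨_, hd⟩)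
      exact ⟨a, b, hab, by omega, h1, h2⟩
  exact ⟨_, _, i, j, hij, rfl, rfl, fun a ha => hkmin a (by omega), hp, ht⟩
end
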